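/- Derandomization of randomized advice for quantum witnesses (core of the theorem QMA/rpoly = QMA/poly): Let n, w be natural numbers with w ≥ 2, and set N := 2^w. Let X be a finite type with |X| ≤ 2^n (the inputs), let R be a nonempty finite type (the advice strings), let L : X → Prop be a predicate, and let D : R → ℝ be a probability distribution on R (D r ≥ 0, Σ_r D r = 1). For each x ∈ X and r ∈ R let E(x,r) be an N×N complex matrix that is a POVM element (both E(x,r) and 1 − E(x,r) are positive semidefinite); for a unit vector φ ∈ ℂ^N, the acceptance probability is the real number ⟨φ, E(x,r)φ⟩. Let δ := 2^{−(n+3w+2)}. Suppose that: (i) for every x with L x there exists a unit vector φ ∈ ℂ^N such that Σ_r D r · ⟨φ, E(x,r)φ⟩ ≥ 1 − δ, and (ii) for every x with ¬ L x and every unit vector φ ∈ ℂ^N, Σ_r D r · ⟨φ, E(x,r)φ⟩ ≤ δ. Then there exists a single fixed advice string r ∈ R such that: for every x with L x there exists a unit vector φ with ⟨φ, E(x,r)φ⟩ ≥ 2/3, and for every x with ¬ L x and every unit vector φ, ⟨φ, E(x,r)φ⟩ ≤ 1/3. -/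

import Mathlib

open Matrix BigOperators ComplexOrder

/-!
Fix for every yes-instance an accepting witness. A naive union bound over the continuum of witnesses
of a no-instance fails, but the trace of `E x r`, the sum of its acceptance probabilities on the `N`
basis vectors, dominates its acceptance probability on every unit vector and has mean at most `N δ`.
So each input has a nonnegative failure bound, a function of the advice, of mean at most `N δ`;
summing over the inputs, some advice string makes all of these at most `|X| N δ` at once.
-/

section UnionBound

variable {X R : Type*} [Fintype X] [Fintype R] {D : R → ℝ}

lemma exists_le_weighted_sum (hD0 : ∀ r, 0 ≤ D r) (hD1 : ∑ r, D r = 1) (f : R → ℝ) :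
    ∃ r, f r ≤ ∑ s, D s * f s := by
  obtain ⟨r, -, hr⟩ := (concaveOn_id convex_univ).exists_le_of_centerMass
    (t := Finset.univ) (p := f) (fun r _ => hD0 r) (hD1 ▸ one_pos) fun _ _ => Set.mem_univ _
  exact ⟨r, by simpa [Finset.centerMass_eq_of_sum_1 _ _ hD1] using hr⟩

lemma exists_forall_le_card_mul (hD0 : ∀ r, 0 ≤ D r) (hD1 : ∑ r, D r = 1) {F : X → R → ℝ}
    (hF : ∀ x r, 0 ≤ F x r) {c : ℝ} (hc : ∀ x, ∑ r, D r * F x r ≤ c) :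
    ∃ r, ∀ x, F x r ≤ Fintype.card X * c := by
  obtain ⟨r, hr⟩ := exists_le_weighted_sum hD0 hD1 fun r => ∑ x, F x r
  refine ⟨r, fun x => ?_⟩
  calc F x r ≤ ∑ y, F y r := Finset.single_le_sum (fun y _ => hF y r) (Finset.mem_univ x)
    _ ≤ ∑ s, D s * ∑ y, F y s := hr
    _ = ∑ y, ∑ s, D s * F y s := by simp only [Finset.mul_sum]; exact Finset.sum_comm
    _ ≤ Fintype.card X * c := by
      simpa using Finset.sum_le_card_nsmul Finset.univ _ c fun y _ => hc y

end UnionBound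

section Trace

variable {ι S : Type*} [Fintype ι] [CommRing S] [PartialOrder S] [StarRing S] [StarOrderedRing S]

lemma dotProduct_mulVec_le_trace {A : Matrix ι ι S} (hA : A.PosSemidef) {φ : ι → S}
    (hφ : star φ ⬝ᵥ φ = 1) : star φ ⬝ᵥ A *ᵥ φ ≤ A.trace := by
  classical
  -- `P` projects onto the orthogonal complement of `φ`, so the difference is `tr (P A P) ≥ 0`.
  set P : Matrix ι ι S := 1 - vecMulVec φ (star φ) with hP
  have hPH : Pᴴ = P := by simp [hP, conjTranspose_vecMulVec]
  have hPP : P * P = P := by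
    simp [hP, sub_mul, mul_sub, vecMulVec_mul_vecMulVec, hφ]
  have htrace : (P * A * Pᴴ).trace = A.trace - star φ ⬝ᵥ A *ᵥ φ := by
    rw [hPH, trace_mul_cycle, hPP, hP, sub_mul, one_mul, trace_sub, trace_mul_comm,
      mul_vecMulVec, trace_vecMulVec, dotProduct_comm]
  exact sub_nonneg.mp (htrace ▸ (hA.mul_mul_conjTranspose_same P).trace_nonneg)

end Trace

section AcceptProb

variable {𝕜 ι : Type*} [RCLike 𝕜] [Fintype ι]

/-- The probability `⟨φ, A φ⟩` that the measurement with accepting POVM element `A` accepts the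
state `φ`. It is defined for all `A` and `φ`, as the real part of the quadratic form. -/
noncomputable def acceptProb (A : Matrix ι ι 𝕜) (φ : ι → 𝕜) : ℝ :=
  RCLike.re (star φ ⬝ᵥ A *ᵥ φ)

lemma acceptProb_nonneg {A : Matrix ι ι 𝕜} (hA : A.PosSemidef) (φ : ι → 𝕜) :
    0 ≤ acceptProb A φ :=
  hA.re_dotProduct_nonneg φ

lemma acceptProb_le_re_trace {A : Matrix ι ι 𝕜} (hA : A.PosSemidef) {φ : ι → 𝕜}
    (hφ : star φ ⬝ᵥ φ = 1) : acceptProb A φ ≤ RCLike.re A.trace :=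
  RCLike.re_monotone (dotProduct_mulVec_le_trace hA hφ)

lemma acceptProb_one_sub [DecidableEq ι] (A : Matrix ι ι 𝕜) {φ : ι → 𝕜}
    (hφ : star φ ⬝ᵥ φ = 1) : acceptProb (1 - A) φ = 1 - acceptProb A φ := by
  simp [acceptProb, sub_mulVec, hφ]

lemma acceptProb_single [DecidableEq ι] (A : Matrix ι ι 𝕜) (i : ι) :
    acceptProb A (Pi.single i 1) = RCLike.re (A i i) := by
  simp [acceptProb]

lemma acceptProb_eq_re_sum (A : Matrix ι ι ℂ) (φ : ι → ℂ) :
    acceptProb A φ = (∑ a, ∑ b, (starRingEnd ℂ) (φ a) * A a b * φ b).re := by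
  simp [acceptProb, dotProduct, mulVec, Finset.mul_sum, mul_assoc]

lemma sum_normSq_eq_one_iff (φ : ι → ℂ) :
    ∑ a, Complex.normSq (φ a) = 1 ↔ star φ ⬝ᵥ φ = 1 := by
  simp only [dotProduct, Pi.star_apply, RCLike.star_def, ← Complex.normSq_eq_conj_mul_self]
  norm_cast

lemma sum_mul_re_trace_le {R : Type*} [Fintype R] {D : R → ℝ} {E : R → Matrix ι ι 𝕜} {δ : ℝ}
    (h : ∀ i, ∑ r, D r * RCLike.re (E r i i) ≤ δ) :
    ∑ r, D r * RCLike.re (E r).trace ≤ Fintype.card ι * δ := by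
  calc ∑ r, D r * RCLike.re (E r).trace = ∑ i, ∑ r, D r * RCLike.re (E r i i) := by
        simp only [trace, diag_apply, map_sum, Finset.mul_sum]
        exact Finset.sum_comm
    _ ≤ Fintype.card ι * δ := by
      simpa using Finset.sum_le_card_nsmul Finset.univ _ δ fun i _ => h i

/-- The verifier with accepting POVM element `A` decides the proposition `P` with error `ε`: some
witness state is accepted with probability at least `1 - ε` if `P` holds, and every one is accepted
with probability at most `ε` if `P` fails. States are vectors `φ` with `⟨φ, φ⟩ = 1`. -/
def DecidesWithError (A : Matrix ι ι 𝕜) (P : Prop) (ε : ℝ) : Prop :=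
  (P → ∃ φ : ι → 𝕜, star φ ⬝ᵥ φ = 1 ∧ 1 - ε ≤ acceptProb A φ) ∧
    (¬ P → ∀ φ : ι → 𝕜, star φ ⬝ᵥ φ = 1 → acceptProb A φ ≤ ε)

lemma DecidesWithError.mono {A : Matrix ι ι 𝕜} {P : Prop} {ε ε' : ℝ}
    (h : DecidesWithError A P ε) (hε : ε ≤ ε') : DecidesWithError A P ε' :=
  ⟨fun hP => (h.1 hP).imp fun _ hφ => ⟨hφ.1, by linarith [hφ.2]⟩,
    fun hP φ hφ => (h.2 hP φ hφ).trans hε⟩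

end AcceptProb

section Derandomization

variable {𝕜 ι X R : Type*} [RCLike 𝕜] [Fintype ι] [DecidableEq ι] [Fintype X] [Fintype R]
  {D : R → ℝ} {δ : ℝ}

lemma exists_weighted_sum_le_forall_decidesWithError (hD0 : ∀ r, 0 ≤ D r)
    (hD1 : ∑ r, D r = 1) {E : R → Matrix ι ι 𝕜} (hE0 : ∀ r, (E r).PosSemidef)
    (hE1 : ∀ r, (1 - E r).PosSemidef) {P : Prop}
    (hyes : P → ∃ φ : ι → 𝕜, star φ ⬝ᵥ φ = 1 ∧ 1 - δ ≤ ∑ r, D r * acceptProb (E r) φ)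
    (hno : ¬ P → ∀ i, ∑ r, D r * RCLike.re (E r i i) ≤ δ) :
    ∃ F : R → ℝ, (∀ r, 0 ≤ F r) ∧ ∑ r, D r * F r ≤ Fintype.card ι * δ ∧
      ∀ r, DecidesWithError (E r) P (F r) := by
  by_cases hP : P
  · obtain ⟨φ, hφ, hacc⟩ := hyes hP
    have hrej0 (r : R) : 0 ≤ acceptProb (1 - E r) φ := acceptProb_nonneg (hE1 r) φ
    have hrej : ∑ r, D r * acceptProb (1 - E r) φ ≤ δ := by
      simp only [acceptProb_one_sub _ hφ, mul_sub, mul_one, Finset.sum_sub_distrib, hD1]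
      linarith
    have hδ : 0 ≤ δ := (Finset.sum_nonneg fun r _ => mul_nonneg (hD0 r) (hrej0 r)).trans hrej
    have : Nonempty ι := not_isEmpty_iff.mp fun _ => by simp at hφ
    have hcard : (1 : ℝ) ≤ Fintype.card ι := mod_cast Fintype.card_pos
    exact ⟨fun r => acceptProb (1 - E r) φ, hrej0, hrej.trans (le_mul_of_one_le_left hδ hcard),
      fun r => ⟨fun _ => ⟨φ, hφ, by simp [acceptProb_one_sub _ hφ]⟩, absurd hP⟩⟩
  · exact ⟨fun r => RCLike.re (E r).trace, fun r => (RCLike.nonneg_iff.mp (hE0 r).trace_nonneg).1,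
      sum_mul_re_trace_le (hno hP),
      fun r => ⟨fun h => absurd h hP, fun _ _ hφ => acceptProb_le_re_trace (hE0 r) hφ⟩⟩

theorem derandomize_qma_advice_general (L : X → Prop) (hD0 : ∀ r, 0 ≤ D r)
    (hD1 : ∑ r, D r = 1) {E : X → R → Matrix ι ι 𝕜} (hE0 : ∀ x r, (E x r).PosSemidef)
    (hE1 : ∀ x r, (1 - E x r).PosSemidef)
    (hyes : ∀ x, L x → ∃ φ : ι → 𝕜, star φ ⬝ᵥ φ = 1 ∧
      1 - δ ≤ ∑ r, D r * acceptProb (E x r) φ)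
    (hno : ∀ x, ¬ L x → ∀ i, ∑ r, D r * RCLike.re (E x r i i) ≤ δ) :
    ∃ r, ∀ x, DecidesWithError (E x r) (L x) (Fintype.card X * (Fintype.card ι * δ)) := by
  choose F hF0 hFδ hF using fun x =>
    exists_weighted_sum_le_forall_decidesWithError hD0 hD1 (hE0 x) (hE1 x) (hyes x) (hno x)
  obtain ⟨r, hr⟩ := exists_forall_le_card_mul hD0 hD1 hF0 hFδ
  exact ⟨r, fun x => (hF x r).mono (hr x)⟩

end Derandomization

lemma mul_two_pow_mul_one_div_le {m n : ℕ} (hm : m ≤ 2 ^ n) (w : ℕ) :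
    (m : ℝ) * (2 ^ w * (1 / 2 ^ (n + 3 * w + 2))) ≤ 1 / 3 := by
  have hm' : (m : ℝ) ≤ 2 ^ n := mod_cast hm
  calc (m : ℝ) * (2 ^ w * (1 / 2 ^ (n + 3 * w + 2)))
      ≤ 2 ^ n * (2 ^ w * (1 / 2 ^ (n + 3 * w + 2))) := by gcongr
    _ = (1 / 2) ^ (2 * w) * (1 / 4) := by
      rw [show n + 3 * w + 2 = n + w + 2 * w + 2 by ring, pow_add, pow_add, pow_add,
        _root_.one_div_pow]
      field_simp
      norm_num
    _ ≤ 1 * (1 / 4) := by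
      gcongr
      exact pow_le_one₀ (by norm_num) (by norm_num)
    _ ≤ 1 / 3 := by norm_num

/-- Derandomization of randomized advice for quantum witnesses (core of
`QMA/rpoly = QMA/poly`).  With witness dimension `N = 2^w` (`w ≥ 2`), at most
`2^n` inputs, and error `δ = 2^{-(n+3w+2)}` under the advice distribution `D`,
there is a single fixed advice string `r` for which the verifier accepts some
witness with probability `≥ 2/3` on every yes-instance, and accepts every
witness with probability `≤ 1/3` on every no-instance. -/
theorem derandomize_qma_advice
    {n w N : ℕ} (hw : 2 ≤ w) (hN : N = 2 ^ w)
    {X R : Type} [Fintype X] [Fintype R] [Nonempty R]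
    (hX : Fintype.card X ≤ 2 ^ n)
    (L : X → Prop)
    (D : R → ℝ) (hD0 : ∀ r, 0 ≤ D r) (hD1 : ∑ r, D r = 1)
    (E : X → R → Matrix (Fin N) (Fin N) ℂ)
    (hEpsd : ∀ x r, (E x r).PosSemidef)
    (hE1 : ∀ x r, (1 - E x r).PosSemidef)
    (δ : ℝ) (hδ : δ = 1 / 2 ^ (n + 3 * w + 2))
    (hyes : ∀ x, L x → ∃ φ : Fin N → ℂ, (∑ a, Complex.normSq (φ a) = 1) ∧
      1 - δ ≤ ∑ r, D r * (∑ a, ∑ b, (starRingEnd ℂ) (φ a) * E x r a b * φ b).re)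
    (hno : ∀ x, ¬ L x → ∀ φ : Fin N → ℂ, (∑ a, Complex.normSq (φ a) = 1) →
      ∑ r, D r * (∑ a, ∑ b, (starRingEnd ℂ) (φ a) * E x r a b * φ b).re ≤ δ) :
    ∃ r : R,
      (∀ x, L x → ∃ φ : Fin N → ℂ, (∑ a, Complex.normSq (φ a) = 1) ∧
        (2 / 3 : ℝ) ≤ (∑ a, ∑ b, (starRingEnd ℂ) (φ a) * E x r a b * φ b).re) ∧
      (∀ x, ¬ L x → ∀ φ : Fin N → ℂ, (∑ a, Complex.normSq (φ a) = 1) →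
        (∑ a, ∑ b, (starRingEnd ℂ) (φ a) * E x r a b * φ b).re ≤ (1 / 3 : ℝ)) := by
  have hthird : (2 / 3 : ℝ) = 1 - 1 / 3 := by norm_num
  simp only [sum_normSq_eq_one_iff, ← acceptProb_eq_re_sum, hthird] at hyes hno ⊢
  have hbasis (x : X) (hx : ¬ L x) (i : Fin N) : ∑ r, D r * (E x r i i).re ≤ δ := by
    simpa [acceptProb_single] using hno x hx (Pi.single i 1) (by simp)
  obtain ⟨r, hr⟩ := derandomize_qma_advice_general L hD0 hD1 hEpsd hE1 hyes hbasis
  have hbound : (Fintype.card X : ℝ) * (Fintype.card (Fin N) * δ) ≤ 1 / 3 := by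
    simpa [hN, hδ] using mul_two_pow_mul_one_div_le hX w
  have hdecides (x : X) : DecidesWithError (E x r) (L x) (1 / 3) := (hr x).mono hbound
  exact ⟨r, fun x => (hdecides x).1, fun x => (hdecides x).2⟩
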